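/- Let G be a finite simple graph containing a vertex v of degree 5, and let v₁, v₂, v₃ be three distinct neighbors of v such that v₁v₂ and v₂v₃ are edges of G, v₁ and v₃ are not adjacent, deg(v₁) = deg(v₃) = 4 and deg(v₂) = 5. If G − {v, v₁, v₂, v₃} is (3,1)-decomposable, then G is (3,1)-decomposable. (This is Case 1 of Lemma 2.3(1), the configuration of two adjacent (4,5,5)-triangles sharing the edge vv₂ with the 5-vertex in the middle.) -/

import Mathlib

open SimpleGraph

/-- A graph `H` is `d`-degenerate: every induced subgraph on a nonempty vertex set
has a vertex of degree at most `d` (within that induced subgraph). -/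
def Degenerate {V : Type*} (d : ℕ) (H : SimpleGraph V) : Prop :=
  ∀ s : Set V, s.Nonempty → ∃ v ∈ s, (H.neighborSet v ∩ s).ncard ≤ d

/-- The graph `H` has maximum degree at most `h`. -/
def MaxDegreeLE {V : Type*} (h : ℕ) (H : SimpleGraph V) : Prop :=
  ∀ v : V, (H.neighborSet v).ncard ≤ h

/-- A graph `G` is `(d,h)`-decomposable: its edge set is partitioned into the edge
sets of two spanning subgraphs `H₁` and `H₂`, where `H₁` is `d`-degenerate and
`H₂` has maximum degree at most `h`. -/
def Decomposable {V : Type*} (d h : ℕ) (G : SimpleGraph V) : Prop :=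
  ∃ H₁ H₂ : SimpleGraph V, H₁ ⊔ H₂ = G ∧ Disjoint H₁ H₂ ∧
    Degenerate d H₁ ∧ MaxDegreeLE h H₂

/-!
The four vertices carry a `4`-cycle `v v₁ v₂ v₃`. Put its edges `vv₁` and `v₂v₃` into the part of
bounded degree: they form a matching on the removed vertices, so they do not interfere with the
given decomposition. In the rest of the graph `v₁` and `v₃` then have degree at most `d = 3`, while
`v` and `v₂` have degree at most `d + 1`; once `v₁` and `v₃` are removed, `v` loses its neighbour
`v₃` and `v₂` its neighbour `v₁`, so all four vertices can be peeled off one at a time.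
-/

section

variable {V W : Type*} {G H M : SimpleGraph V} {d h : ℕ}

theorem encard_le_of_subset_of_notMem {α : Type*} {s t : Set α} {a : α} (hst : s ⊆ t) (hat : a ∈ t)
    (has : a ∉ s) (ht : t.encard ≤ d + 1) : s.encard ≤ d := by
  have hlt : s.encard + 1 ≤ d + 1 :=
    calc
      s.encard + 1 = (insert a s).encard := (Set.encard_insert_of_notMem has).symm
      _ ≤ t.encard := Set.encard_mono (Set.insert_subset hat hst)
      _ ≤ d + 1 := ht
  exact (ENat.add_le_add_iff_right ENat.one_ne_top).1 hlt

theorem exists_encard_neighborSet_inter_le {A B s : Set V}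
    (hA : ∀ a ∈ A, (H.neighborSet a).encard ≤ d)
    (hB : ∀ b ∈ B, (H.neighborSet b).encard ≤ d + 1 ∧ ∃ a ∈ A, H.Adj b a)
    (hs : (s ∩ (A ∪ B)).Nonempty) : ∃ x ∈ s, (H.neighborSet x ∩ s).encard ≤ d := by
  by_cases hsA : ∃ a ∈ A, a ∈ s
  · obtain ⟨a, haA, has⟩ := hsA
    exact ⟨a, has, (Set.encard_mono Set.inter_subset_left).trans (hA a haA)⟩
  · push Not at hsA
    obtain ⟨b, hbs, hbA | hbB⟩ := hs
    · exact absurd hbs (hsA b hbA)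
    · obtain ⟨hdeg, a, haA, hba⟩ := hB b hbB
      exact ⟨b, hbs, encard_le_of_subset_of_notMem Set.inter_subset_left hba
        (fun ha ↦ hsA a haA ha.2) hdeg⟩

theorem encard_neighborSet_sdiff_le {u w : V} (hG : G.Adj u w) (hM : M.Adj u w)
    (hu : (G.neighborSet u).encard ≤ d + 1) : ((G \ M).neighborSet u).encard ≤ d :=
  encard_le_of_subset_of_notMem (fun _ hx ↦ hx.1) hG (fun hw ↦ hw.2 hM) hu

theorem Degenerate.of_induce {t : Set V} (ht : Degenerate d (H.induce t))
    (hpeel : ∀ s, ¬s ⊆ t → ∃ x ∈ s, (H.neighborSet x ∩ s).encard ≤ d) : Degenerate d H := by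
  intro s hs
  by_cases hst : s ⊆ t
  · obtain ⟨x, hx⟩ := hs
    obtain ⟨u, hus, hu⟩ := ht (Subtype.val ⁻¹' s) ⟨⟨x, hst hx⟩, hx⟩
    have himage : Subtype.val '' ((H.induce t).neighborSet u ∩ Subtype.val ⁻¹' s) =
        H.neighborSet u ∩ s := by
      ext y
      constructor
      · rintro ⟨z, ⟨hz, hzs⟩, rfl⟩
        exact ⟨hz, hzs⟩
      · rintro ⟨hy, hys⟩
        exact ⟨⟨y, hst hys⟩, ⟨hy, hys⟩, rfl⟩
    refine ⟨u, hus, ?_⟩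
    rwa [← himage, Set.ncard_image_of_injective _ Subtype.val_injective]
  · obtain ⟨x, hxs, hx⟩ := hpeel s hst
    exact ⟨x, hxs, (Set.encard_le_coe_iff_finite_ncard_le.1 hx).2⟩

theorem neighborSet_eq_empty_of_notMem_support {x : V} (hx : x ∉ G.support) :
    G.neighborSet x = ∅ :=
  (neighborSet_eq_empty G).2 ((notMem_support_iff_isIsolated G).1 hx)

theorem MaxDegreeLE.sup (hG : MaxDegreeLE h G) (hH : MaxDegreeLE h H)
    (hdisj : Disjoint G.support H.support) : MaxDegreeLE h (G ⊔ H) := by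
  intro x
  rw [neighborSet_sup]
  by_cases hx : x ∈ G.support
  · rw [neighborSet_eq_empty_of_notMem_support (hdisj.notMem_of_mem_left hx), Set.union_empty]
    exact hG x
  · rw [neighborSet_eq_empty_of_notMem_support hx, Set.empty_union]
    exact hH x

theorem MaxDegreeLE.map (f : V ↪ W) (hG : MaxDegreeLE h G) : MaxDegreeLE h (G.map f) := by
  intro y
  by_cases hy : y ∈ (G.map f).support
  · rw [support_map] at hy
    obtain ⟨x, -, rfl⟩ := hy
    rw [neighborSet_map, Set.ncard_image_of_injective _ f.injective]
    exact hG x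
  · rw [neighborSet_eq_empty_of_notMem_support hy, Set.ncard_empty]
    exact Nat.zero_le h

theorem maxDegreeLE_edge (hh : 1 ≤ h) (a b : V) : MaxDegreeLE h (edge a b) := by
  intro x
  have hsub : ((edge a b).neighborSet x).Subsingleton := by
    intro y hy z hz
    rw [mem_neighborSet, edge_adj] at hy hz
    grind
  have : Finite ((edge a b).neighborSet x) := hsub.finite
  exact (Set.ncard_le_one_iff_subsingleton.2 hsub).trans hh

theorem support_edge_subset (a b : V) : (edge a b).support ⊆ {a, b} := by
  rintro x ⟨y, hxy⟩
  have := (edge_adj a b x y).1 hxy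
  grind

theorem Decomposable.of_induce {t : Set V} (hG : Decomposable d h (G.induce t)) (hMG : M ≤ G)
    (hM : MaxDegreeLE h M) (hMt : Disjoint M.support t)
    (hpeel : ∀ s, ¬s ⊆ t → ∃ x ∈ s, ((G \ M).neighborSet x ∩ s).encard ≤ d) :
    Decomposable d h G := by
  obtain ⟨K₁, K₂, hsup, hdisj, hK₁, hK₂⟩ := hG
  let E : SimpleGraph V := K₂.map (Function.Embedding.subtype (· ∈ t)) ⊔ M
  have hEG : E ≤ G :=
    sup_le ((map_le_iff_le_comap _ _ _).2 (le_sup_right.trans hsup.le)) hMG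
  have hE : MaxDegreeLE h E := by
    refine (hK₂.map _).sup hM (hMt.symm.mono_left ?_)
    rw [support_map]
    rintro _ ⟨x, -, rfl⟩
    exact x.2
  have hinduce : (G \ E).induce t = K₁ := by
    have hM_induce : M.induce t = ⊥ := by
      ext x y
      simpa using fun hxy : M.Adj x y ↦ hMt.notMem_of_mem_left hxy.mem_support_left x.2
    have hE_induce : E.induce t = K₂ :=
      calc
        E.induce t = (K₂.map (Function.Embedding.subtype (· ∈ t))).induce t ⊔ M.induce t := rfl
        _ = K₂ := by rw [hM_induce, sup_bot_eq]; exact comap_map_eq _ _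
    calc
      (G \ E).induce t = G.induce t \ E.induce t := rfl
      _ = (K₁ ⊔ K₂) \ K₂ := by rw [hE_induce, hsup]
      _ = K₁ := hdisj.sup_sdiff_cancel_right
  refine ⟨G \ E, E, sdiff_sup_cancel hEG, disjoint_sdiff_self_left, ?_, hE⟩
  refine Degenerate.of_induce (hinduce.symm ▸ hK₁) fun s hs ↦ ?_
  obtain ⟨x, hxs, hx⟩ := hpeel s hs
  have hsub : (G \ E).neighborSet x ⊆ (G \ M).neighborSet x :=
    fun y hy ↦ ⟨hy.1, fun hxy ↦ hy.2 (Or.inr hxy)⟩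
  exact ⟨x, hxs, (Set.encard_mono (Set.inter_subset_inter_left s hsub)).trans hx⟩

end

theorem stmt_3_general {V : Type*} {d h : ℕ} (hh : 1 ≤ h) (G : SimpleGraph V) (v v₁ v₂ v₃ : V)
    (hne02 : v ≠ v₂) (hne13 : v₁ ≠ v₃)
    (h01 : G.Adj v v₁) (h12 : G.Adj v₁ v₂) (h23 : G.Adj v₂ v₃) (h03 : G.Adj v v₃)
    (hd0 : (G.neighborSet v).encard ≤ d + 2) (hd1 : (G.neighborSet v₁).encard ≤ d + 1)
    (hd2 : (G.neighborSet v₂).encard ≤ d + 2) (hd3 : (G.neighborSet v₃).encard ≤ d + 1)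
    (hdec : Decomposable d h (G.induce {u : V | u ≠ v ∧ u ≠ v₁ ∧ u ≠ v₂ ∧ u ≠ v₃})) :
    Decomposable d h G := by
  let M : SimpleGraph V := edge v v₁ ⊔ edge v₂ v₃
  have hMG : M ≤ G := sup_le ((edge_le_iff _).2 (.inr h01)) ((edge_le_iff _).2 (.inr h23))
  have hMdeg : MaxDegreeLE h M := by
    refine (maxDegreeLE_edge hh v v₁).sup (maxDegreeLE_edge hh v₂ v₃)
      (.mono (support_edge_subset v v₁) (support_edge_subset v₂ v₃) ?_)
    simp [hne02.symm, hne13.symm, h12.ne.symm, h03.ne.symm]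
  have hMsupp : Disjoint M.support {u : V | u ≠ v ∧ u ≠ v₁ ∧ u ≠ v₂ ∧ u ≠ v₃} := by
    rw [Set.disjoint_left]
    rintro x ⟨y, hxy | hxy⟩ ⟨hx0, hx1, hx2, hx3⟩
    · exact (support_edge_subset v v₁ ⟨y, hxy⟩).elim hx0 hx1
    · exact (support_edge_subset v₂ v₃ ⟨y, hxy⟩).elim hx2 hx3
  have hM01 : M.Adj v v₁ := .inl (by simp [edge_adj, h01.ne])
  have hM23 : M.Adj v₂ v₃ := .inr (by simp [edge_adj, h23.ne])
  have hM03 : ¬M.Adj v v₃ := by simp [M, edge_adj, hne02, hne13.symm, h01.ne, h03.ne]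
  have hM21 : ¬M.Adj v₂ v₁ := by simp [M, edge_adj, hne02.symm, hne13, h12.ne, h12.ne.symm]
  refine hdec.of_induce hMG hMdeg hMsupp fun s hs ↦ ?_
  refine exists_encard_neighborSet_inter_le (A := {v₁, v₃}) (B := {v, v₂}) ?_ ?_ ?_
  · rintro a (rfl | rfl)
    · exact encard_neighborSet_sdiff_le h01.symm hM01.symm hd1
    · exact encard_neighborSet_sdiff_le h23.symm hM23.symm hd3
  · rintro b (rfl | rfl)
    · exact ⟨encard_neighborSet_sdiff_le h01 hM01 hd0, v₃, by simp, h03, hM03⟩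
    · exact ⟨encard_neighborSet_sdiff_le h23 hM23 hd2, v₁, by simp, h12.symm, hM21⟩
  · obtain ⟨x, hxs, hx⟩ := Set.not_subset.1 hs
    exact ⟨x, hxs, by grind⟩

theorem stmt_3 {V : Type*} [Fintype V] (G : SimpleGraph V) (v v₁ v₂ v₃ : V)
    (hv : (G.neighborSet v).ncard = 5)
    (hne12 : v₁ ≠ v₂) (hne13 : v₁ ≠ v₃) (hne23 : v₂ ≠ v₃)
    (hadj1 : G.Adj v v₁) (hadj2 : G.Adj v v₂) (hadj3 : G.Adj v v₃)
    (h12 : G.Adj v₁ v₂) (h23 : G.Adj v₂ v₃) (h13 : ¬ G.Adj v₁ v₃)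
    (hd1 : (G.neighborSet v₁).ncard = 4) (hd3 : (G.neighborSet v₃).ncard = 4)
    (hd2 : (G.neighborSet v₂).ncard = 5)
    (hdec : Decomposable 3 1 (G.induce {u : V | u ≠ v ∧ u ≠ v₁ ∧ u ≠ v₂ ∧ u ≠ v₃})) :
    Decomposable 3 1 G := by
  have hdeg {u : V} {n : ℕ} (hu : (G.neighborSet u).ncard = n) : (G.neighborSet u).encard ≤ n :=
    Set.encard_le_coe_iff_finite_ncard_le.2 ⟨Set.toFinite _, hu.le⟩
  exact stmt_3_general le_rfl G v v₁ v₂ v₃ hadj2.ne hne13 hadj1 h12 h23 hadj3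
    (hdeg hv) (hdeg hd1) (hdeg hd2) (hdeg hd3) hdec
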